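/- Let X be an infinite set and let G be a subgroup of Sym(X) fully containing FAlt(X). If G is a torsion group (every element of G has finite order), then G has the R_∞ property. -/

import Mathlib

/-- `FAlt X`: the subgroup of `Equiv.Perm X` generated by all 3-cycles, i.e. by those
permutations whose support has exactly 3 elements. -/
def FAlt (X : Type*) : Subgroup (Equiv.Perm X) :=
  Subgroup.closure {σ : Equiv.Perm X | {x | σ x ≠ x}.ncard = 3}

/-- Twisted conjugacy: `a` and `b` are `φ`-twisted conjugate if `(φ x)⁻¹ * a * x = b`
for some `x`. -/
def TwistedConj {G : Type*} [Group G] (φ : G ≃* G) (a b : G) : Prop :=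
  ∃ x : G, (φ x)⁻¹ * a * x = b

/-- A group has the `R∞` property if every automorphism has infinitely many twisted
conjugacy classes. -/
def RInfinity (G : Type*) [Group G] : Prop :=
  ∀ φ : G ≃* G, Infinite (Quot (TwistedConj φ))

/-!
Within `G` the 3-cycles are the elements of order 3 all of whose commutators have order 2 or odd
order, so every automorphism `φ` of `G` permutes them. Two 3-cycles share a directed edge `a → b`
if and only if they are distinct with a product of order 2, or equal; hence `φ` carries the 3-cycles
along `a → b` to those along some `a' → b'`. Every point other than `a` and `b` is the third vertex
of exactly one 3-cycle along `a → b`, so `φ` induces a bijection on points, and it follows that `φ`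
is conjugation by a permutation `τ` of `X`.

The twisted conjugacy classes of `φ` then correspond to the `G`-conjugacy classes in the coset
`τ⁻¹G`. Either the fixed points or the moved points of `τ⁻¹` form an infinite set, and multiplying
by suitable 3-cycles yields elements of `τ⁻¹G` for which this set strictly decreases. No two of them
are conjugate, because an element of finite order cannot map a set onto a proper subset of itself.
-/

open Equiv List MulAction Pointwise Cardinal
open scoped commutatorElement

section ThreeCycle

variable {X : Type*} {σ τ p q : Perm X} {a b c d e x : X}

/-- A 3-cycle on a possibly infinite type, phrased as in the definition of `FAlt`: Mathlib's
`Equiv.Perm.IsThreeCycle` requires a finite type. -/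
def IsThreeCycle (σ : Perm X) : Prop :=
  {x | σ x ≠ x}.ncard = 3

theorem formPerm_triple_apply [DecidableEq X] (h : [a, b, c].Nodup) (x : X) :
    formPerm [a, b, c] x = if x = a then b else if x = b then c else if x = c then a else x := by
  simp only [formPerm_cons_cons, formPerm_singleton, mul_one, Perm.mul_apply, swap_apply_def]
  grind

theorem isThreeCycle_formPerm [DecidableEq X] (h : [a, b, c].Nodup) :
    IsThreeCycle (formPerm [a, b, c]) := by
  rw [IsThreeCycle, support_formPerm_of_nodup' _ h (by simp), Set.ncard_coe_finset,
    toFinset_card_of_nodup h]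
  rfl

namespace IsThreeCycle

theorem mem_FAlt (hσ : IsThreeCycle σ) : σ ∈ FAlt X :=
  Subgroup.subset_closure hσ

theorem permCongr {Y : Type*} (hσ : IsThreeCycle σ) (e : X ≃ Y) :
    IsThreeCycle (e.permCongr σ) := by
  have : {y | e.permCongr σ y ≠ y} = e '' {x | σ x ≠ x} := by
    ext y
    simp [Equiv.image_eq_preimage_symm, ← Equiv.eq_symm_apply]
  rw [IsThreeCycle, this, Set.ncard_image_of_injective _ e.injective, hσ]

theorem conj (hσ : IsThreeCycle σ) (τ : Perm X) : IsThreeCycle (τ * σ * τ⁻¹) := by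
  simpa only [permCongr_eq_mul] using hσ.permCongr τ

theorem inv (hσ : IsThreeCycle σ) : IsThreeCycle σ⁻¹ := by
  have : {x | σ⁻¹ x ≠ x} = {x | σ x ≠ x} := by
    ext x
    simp only [Set.mem_ofPred_eq, ne_eq, Perm.inv_eq_iff_eq, eq_comm (a := x)]
  rwa [IsThreeCycle, this]

theorem exists_apply_ne (hσ : IsThreeCycle σ) : ∃ x, σ x ≠ x :=
  Set.nonempty_of_ncard_ne_zero (s := {x | σ x ≠ x}) (hσ.trans_ne three_ne_zero)

theorem finite_support (hσ : IsThreeCycle σ) : {x | σ x ≠ x}.Finite :=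
  Set.finite_of_ncard_ne_zero (hσ.trans_ne three_ne_zero)

theorem exists_eq_formPerm [DecidableEq X] (hσ : IsThreeCycle σ) (ha : σ a ≠ a) :
    ∃ b c, [a, b, c].Nodup ∧ σ = formPerm [a, b, c] := by
  obtain ⟨u, v, w, huv, huw, hvw, hsupp⟩ := Set.ncard_eq_three.1 hσ
  have hmoved (x) : σ x ≠ x ↔ x = u ∨ x = v ∨ x = w := Set.ext_iff.1 hsupp x
  have hinj (x y) : σ x = σ y → x = y := fun h ↦ σ.injective h
  clear hsupp
  have hmaps (x) (hx : σ x ≠ x) : σ x = u ∨ σ x = v ∨ σ x = w :=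
    (hmoved _).1 (hx ∘ hinj _ _)
  have hnodup : [a, σ a, σ (σ a)].Nodup := by
    have := hmaps u
    have := hmaps v
    have := hmaps w
    grind
  refine ⟨σ a, σ (σ a), hnodup, Perm.ext fun x ↦ ?_⟩
  rw [formPerm_triple_apply hnodup]
  grind

theorem exists_eq_formPerm_of_apply_eq [DecidableEq X] (hσ : IsThreeCycle σ) (h : σ a = b)
    (hab : a ≠ b) : ∃ c, [a, b, c].Nodup ∧ σ = formPerm [a, b, c] := by
  obtain ⟨b', c, hbc, rfl⟩ := hσ.exists_eq_formPerm (h.trans_ne hab.symm)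
  obtain rfl : b' = b := by rwa [formPerm_triple_apply hbc, if_pos rfl] at h
  exact ⟨c, hbc, rfl⟩

theorem orderOf_eq_three (hσ : IsThreeCycle σ) : orderOf σ = 3 := by
  classical
  obtain ⟨a, ha⟩ := hσ.exists_apply_ne
  obtain ⟨b, c, h, rfl⟩ := hσ.exists_eq_formPerm ha
  exact orderOf_eq_prime (formPerm_pow_length_eq_one_of_nodup _ h) fun h1 ↦ ha (by rw [h1]; rfl)

theorem eq_of_apply_eq (hσ : IsThreeCycle σ) (hτ : IsThreeCycle τ) (ha : σ a ≠ a)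
    (h : σ a = τ a) (h' : σ (σ a) = τ (τ a)) : σ = τ := by
  classical
  obtain ⟨b, c, hbc, rfl⟩ := hσ.exists_eq_formPerm ha
  obtain ⟨d, e, hde, rfl⟩ := hτ.exists_eq_formPerm (h ▸ ha)
  simp only [formPerm_triple_apply hbc, formPerm_triple_apply hde] at h h'
  grind

end IsThreeCycle

theorem formPerm_mul_formPerm_of_common_edge [DecidableEq X] (h : [a, b, c, d].Nodup) :
    formPerm [a, b, c] * formPerm [a, b, d] = swap a c * swap b d := by
  ext x
  simp only [Perm.mul_apply, formPerm_triple_apply (show [a, b, c].Nodup by grind),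
    formPerm_triple_apply (show [a, b, d].Nodup by grind), swap_apply_def]
  grind

theorem formPerm_mul_formPerm_of_opposite_edge [DecidableEq X] (h : [a, b, c, d].Nodup) :
    formPerm [a, b, c] * formPerm [b, a, d] = formPerm [a, d, c] := by
  ext x
  simp only [Perm.mul_apply, formPerm_triple_apply (show [a, b, c].Nodup by grind),
    formPerm_triple_apply (show [b, a, d].Nodup by grind),
    formPerm_triple_apply (show [a, d, c].Nodup by grind)]
  grind

theorem formPerm_mul_formPerm_of_common_vertex [DecidableEq X] (h : [a, b, c, d, e].Nodup) :
    formPerm [a, b, c] * formPerm [a, d, e] = formPerm [a, d, e, b, c] := by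
  ext x
  simp only [formPerm_cons_cons, formPerm_singleton, mul_one, Perm.mul_apply, swap_apply_def]
  grind

theorem odd_orderOf_formPerm [DecidableEq X] {l : List X} (hl : l.Nodup) (hodd : Odd l.length) :
    Odd (orderOf (formPerm l)) :=
  hodd.of_dvd_nat (orderOf_dvd_of_pow_eq_one (formPerm_pow_length_eq_one_of_nodup l hl))

theorem orderOf_swap_mul_swap [DecidableEq X] (h : [a, b, c, d].Nodup) :
    orderOf (swap a b * swap c d) = 2 := by
  have hcomm : Commute (swap a b) (swap c d) := (Perm.disjoint_swap_swap h).commute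
  refine orderOf_eq_prime (by simp [hcomm.mul_pow, sq]) fun h1 ↦ ?_
  have := Perm.ext_iff.1 h1 a
  simp only [Perm.mul_apply, swap_apply_def, Perm.one_apply] at this
  grind

namespace IsThreeCycle

theorem pow_three (hσ : IsThreeCycle σ) : σ ^ 3 = 1 :=
  hσ.orderOf_eq_three ▸ pow_orderOf_eq_one σ

theorem odd_orderOf_mul_of_commute (hp : IsThreeCycle p) (hq : IsThreeCycle q)
    (hpq : Commute p q) : Odd (orderOf (p * q)) :=
  have : (p * q) ^ 3 = 1 := by rw [hpq.mul_pow, hp.pow_three, hq.pow_three, one_mul]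
  Odd.of_dvd_nat (by decide) (orderOf_dvd_of_pow_eq_one this)

theorem orderOf_mul_eq_two (hp : IsThreeCycle p) (hq : IsThreeCycle q) (hpq : p ≠ q)
    (hx : p x ≠ x) (h : p x = q x) : orderOf (p * q) = 2 := by
  classical
  obtain ⟨c, hc, hpc⟩ := hp.exists_eq_formPerm_of_apply_eq rfl hx.symm
  obtain ⟨d, hd, hqd⟩ := hq.exists_eq_formPerm_of_apply_eq h.symm hx.symm
  have hcd : c ≠ d := fun hcd ↦ hpq (by rw [hpc, hqd, hcd])
  rw [hpc, hqd, formPerm_mul_formPerm_of_common_edge (by grind)]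
  exact orderOf_swap_mul_swap (by grind)

theorem odd_orderOf_mul (hp : IsThreeCycle p) (hq : IsThreeCycle q) (hx : p x ≠ x)
    (h : q (p x) = x) : Odd (orderOf (p * q)) := by
  classical
  obtain ⟨c, hc, hpc⟩ := hp.exists_eq_formPerm_of_apply_eq rfl hx.symm
  obtain ⟨d, hd, hqd⟩ := hq.exists_eq_formPerm_of_apply_eq h hx
  by_cases hcd : c = d
  · have hinv : q = p⁻¹ := by
      rw [hpc, ← formPerm_reverse, hqd, hcd]
      exact formPerm_rotate_one [d, p x, x] (by grind)
    simp [hinv]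
  · rw [hpc, hqd, formPerm_mul_formPerm_of_opposite_edge (by grind)]
    exact odd_orderOf_formPerm (by grind) (by simp [Nat.odd_iff])

theorem odd_orderOf_mul_of_forall_apply_ne (hp : IsThreeCycle p) (hq : IsThreeCycle q)
    (hsame : ∀ x, p x ≠ x → p x ≠ q x) : Odd (orderOf (p * q)) := by
  classical
  by_cases hopp : ∃ x, p x ≠ x ∧ q (p x) = x
  · obtain ⟨x, hx, h⟩ := hopp
    exact hp.odd_orderOf_mul hq hx h
  by_cases hdisj : p.Disjoint q
  · exact hp.odd_orderOf_mul_of_commute hq hdisj.commute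
  obtain ⟨a, hpa, hqa⟩ : ∃ a, p a ≠ a ∧ q a ≠ a := by
    simpa [Perm.Disjoint, not_or] using hdisj
  obtain ⟨b, c, hbc, rfl⟩ := hp.exists_eq_formPerm hpa
  obtain ⟨d, e, hde, rfl⟩ := hq.exists_eq_formPerm hqa
  simp only [formPerm_triple_apply hbc, formPerm_triple_apply hde, not_exists,
    not_and] at hsame hopp
  have hnodup : [a, b, c, d, e].Nodup := by
    have := hsame a
    have := hsame b
    have := hsame c
    have := hopp a
    have := hopp b
    have := hopp c
    clear hsame hopp
    grind
  rw [formPerm_mul_formPerm_of_common_vertex hnodup]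
  exact odd_orderOf_formPerm (by grind) (by simp [Nat.odd_iff])

theorem orderOf_mul_eq_two_iff (hp : IsThreeCycle p) (hq : IsThreeCycle q) :
    orderOf (p * q) = 2 ↔ p ≠ q ∧ ∃ x, p x ≠ x ∧ p x = q x := by
  refine ⟨fun h ↦ ?_, fun ⟨hpq, x, hx, h⟩ ↦ hp.orderOf_mul_eq_two hq hpq hx h⟩
  have heven : ¬Odd (orderOf (p * q)) := by simp [h]
  refine ⟨fun hpq ↦ heven (hp.odd_orderOf_mul_of_commute hq (hpq ▸ .refl p)), ?_⟩
  by_contra! hsame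
  exact heven (hp.odd_orderOf_mul_of_forall_apply_ne hq hsame)

theorem orderOf_mul_eq_two_or_odd (hp : IsThreeCycle p) (hq : IsThreeCycle q) :
    orderOf (p * q) = 2 ∨ Odd (orderOf (p * q)) := by
  by_cases hpq : p = q
  · exact .inr (hp.odd_orderOf_mul_of_commute hq (hpq ▸ .refl p))
  by_cases hsame : ∃ x, p x ≠ x ∧ p x = q x
  · exact .inl ((hp.orderOf_mul_eq_two_iff hq).2 ⟨hpq, hsame⟩)
  · push Not at hsame
    exact .inr (hp.odd_orderOf_mul_of_forall_apply_ne hq hsame)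

end IsThreeCycle

theorem swap_mul_swap_mem_FAlt [DecidableEq X] (h : [a, b, c, d].Nodup) :
    swap a b * swap c d ∈ FAlt X := by
  rw [← formPerm_mul_formPerm_of_common_edge (show [a, c, b, d].Nodup by grind)]
  exact mul_mem (isThreeCycle_formPerm (by grind)).mem_FAlt
    (isThreeCycle_formPerm (by grind)).mem_FAlt

theorem apply_eq_self_of_odd_orderOf (hodd : Odd (orderOf σ)) (h : σ (σ x) = x) : σ x = x := by
  have h2 : Function.IsPeriodicPt σ 2 x := h
  have hord : Function.IsPeriodicPt σ (orderOf σ) x := by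
    rw [Function.IsPeriodicPt, Function.IsFixedPt, Perm.iterate_eq_pow, pow_orderOf_eq_one,
      Perm.one_apply]
  exact (hodd.coprime_two_left.gcd_eq_one ▸ h2.gcd hord : Function.IsPeriodicPt σ 1 x)

theorem apply_apply_apply_of_orderOf_eq_three (h : orderOf σ = 3) (x : X) : σ (σ (σ x)) = x := by
  have : σ ^ 3 = 1 := h ▸ pow_orderOf_eq_one σ
  simpa [pow_succ] using Perm.ext_iff.1 this x

theorem swap_mul_swap_apply [DecidableEq X] (h : [a, b, c, d].Nodup) (x : X) :
    (swap a b * swap c d) x =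
      if x = a then b else if x = b then a else if x = c then d else if x = d then c else x := by
  simp only [Perm.mul_apply, swap_apply_def]
  grind

theorem exists_mem_FAlt_orderOf_commutator (hX : 6 < #X) (hσ : orderOf σ = 3) (ha : σ a ≠ a)
    (hb : σ b ≠ b) (hab : b ∉ [a, σ a, σ (σ a)]) :
    ∃ τ ∈ FAlt X, ¬(orderOf ⁅σ, τ⁆ = 2 ∨ Odd (orderOf ⁅σ, τ⁆)) := by
  classical
  have h3 := apply_apply_apply_of_orderOf_eq_three hσ
  obtain ⟨c, hc⟩ : ∃ c, c ∉ [a, σ a, σ (σ a), b, σ b, σ (σ b)] :=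
    Cardinal.exists_notMem_of_length_lt _ (by simpa using hX)
  have hnodup : [a, σ a, σ (σ a), b, σ b, σ (σ b), c].Nodup := by
    simp only [nodup_cons, mem_cons, not_mem_nil, or_false, not_or] at hab hc ⊢
    grind
  -- For `τ = (a b)(σa c)` the commutator interchanges `a` and `b`, so its order is even, but maps
  -- `σb` to `σa` without mapping `σa` to `σb`, so its order is not 2.
  have hτ := swap_mul_swap_apply (show [a, b, σ a, c].Nodup by grind)
  have hτmem := swap_mul_swap_mem_FAlt (show [a, b, σ a, c].Nodup by grind)
  generalize swap a b * swap (σ a) c = τ at hτ hτmem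
  refine ⟨τ, hτmem, ?_⟩
  have hw (x y z) (hy : τ (σ x) = y) (hz : σ (τ x) = z) : ⁅σ, τ⁆ y = z := by
    simp [← hy, ← hz, commutatorElement_def]
  have hwa : ⁅σ, τ⁆ a = b := hw (σ (σ b)) _ _ (by grind) (by grind)
  have hwb : ⁅σ, τ⁆ b = a := hw (σ (σ a)) _ _ (by grind) (by grind)
  have hwσb : ⁅σ, τ⁆ (σ b) = σ a := hw b _ _ (by grind) (by grind)
  have hwσa : ⁅σ, τ⁆ (σ a) ≠ σ b := by
    rw [hw (σ (σ c)) _ _ (by grind) rfl]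
    grind
  rintro (h2 | hodd)
  · have hsq : ⁅σ, τ⁆ ^ 2 = 1 := h2 ▸ pow_orderOf_eq_one _
    exact hwσa (by simpa [sq, hwσb] using Perm.ext_iff.1 hsq (σ b))
  · have := apply_eq_self_of_odd_orderOf hodd (x := a) (by rw [hwa, hwb])
    grind

theorem isThreeCycle_of_orderOf_commutator (hX : 6 < #X) (hσ : orderOf σ = 3)
    (h : ∀ τ ∈ FAlt X, orderOf ⁅σ, τ⁆ = 2 ∨ Odd (orderOf ⁅σ, τ⁆)) : IsThreeCycle σ := by
  classical
  have h3 := apply_apply_apply_of_orderOf_eq_three hσ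
  obtain ⟨a, ha⟩ : ∃ a, σ a ≠ a := by
    by_contra! h1
    simp [show σ = 1 from Perm.ext h1] at hσ
  have ha' : [a, σ a, σ (σ a)].Nodup := by grind
  suffices σ = formPerm [a, σ a, σ (σ a)] from this ▸ isThreeCycle_formPerm ha'
  ext x
  rw [formPerm_triple_apply ha']
  by_contra hx
  obtain ⟨τ, hτ, hστ⟩ := exists_mem_FAlt_orderOf_commutator (b := x) hX hσ ha (by grind) (by grind)
  exact hστ (h τ hτ)

variable {Y : Type*} {G : Subgroup (Perm X)} {H : Subgroup (Perm Y)}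

theorem isThreeCycle_iff_orderOf_commutator (hG : FAlt X ≤ G) (hX : 6 < #X) (g : G) :
    IsThreeCycle (g : Perm X) ↔
      orderOf g = 3 ∧ ∀ s : G, orderOf ⁅g, s⁆ = 2 ∨ Odd (orderOf ⁅g, s⁆) := by
  simp only [← Subgroup.orderOf_coe, commutatorElement_def, Subgroup.coe_mul, Subgroup.coe_inv]
  refine ⟨fun hg ↦ ⟨hg.orderOf_eq_three, fun s ↦ ?_⟩, fun ⟨hg, hs⟩ ↦ ?_⟩
  · rw [mul_assoc, mul_assoc, ← mul_assoc (s : Perm X)]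
    exact hg.orderOf_mul_eq_two_or_odd (hg.inv.conj s)
  · exact isThreeCycle_of_orderOf_commutator hX hg fun τ hτ ↦ hs ⟨τ, hG hτ⟩

theorem isThreeCycle_apply_iff (hG : FAlt X ≤ G) (hH : FAlt Y ≤ H) (hX : 6 < #X) (hY : 6 < #Y)
    (φ : G ≃* H) (g : G) : IsThreeCycle (φ g : Perm Y) ↔ IsThreeCycle (g : Perm X) := by
  simp only [isThreeCycle_iff_orderOf_commutator hG hX, isThreeCycle_iff_orderOf_commutator hH hY,
    φ.surjective.forall, ← map_commutatorElement, MulEquiv.orderOf_eq]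

/-- The 3-cycles that contain the directed edge `a → b`. -/
def threeCyclesAlong (a b : X) : Set (Perm X) :=
  {σ | IsThreeCycle σ ∧ σ a = b}

theorem formPerm_mem_threeCyclesAlong [DecidableEq X] (h : [a, b, c].Nodup) :
    formPerm [a, b, c] ∈ threeCyclesAlong a b :=
  ⟨isThreeCycle_formPerm h, by rw [formPerm_triple_apply h, if_pos rfl]⟩

theorem mem_threeCyclesAlong_iff (hab : a ≠ b) (hp : p ∈ threeCyclesAlong a b)
    (hq : q ∈ threeCyclesAlong a b) (hpq : p ≠ q) :
    σ ∈ threeCyclesAlong a b ↔ IsThreeCycle σ ∧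
      (σ = p ∨ σ = q ∨ orderOf (p * σ) = 2 ∧ orderOf (q * σ) = 2) := by
  classical
  constructor
  · rintro ⟨hσ, h⟩
    refine ⟨hσ, ?_⟩
    refine or_iff_not_imp_left.2 fun hσp ↦ or_iff_not_imp_left.2 fun hσq ↦ ⟨?_, ?_⟩
    · exact hp.1.orderOf_mul_eq_two hσ (Ne.symm hσp) (hp.2.trans_ne hab.symm) (hp.2.trans h.symm)
    · exact hq.1.orderOf_mul_eq_two hσ (Ne.symm hσq) (hq.2.trans_ne hab.symm) (hq.2.trans h.symm)
  · rintro ⟨hσ, rfl | rfl | ⟨h2p, h2q⟩⟩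
    · exact hp
    · exact hq
    · refine ⟨hσ, ?_⟩
      obtain ⟨-, x, hx, hpx⟩ := (hp.1.orderOf_mul_eq_two_iff hσ).1 h2p
      obtain ⟨-, y, hy, hqy⟩ := (hq.1.orderOf_mul_eq_two_iff hσ).1 h2q
      obtain ⟨c, hc, rfl⟩ := hp.1.exists_eq_formPerm_of_apply_eq hp.2 hab
      obtain ⟨d, hd, rfl⟩ := hq.1.exists_eq_formPerm_of_apply_eq hq.2 hab
      obtain ⟨u, v, hu, rfl⟩ := hσ.exists_eq_formPerm (hpx ▸ hx)
      have hcd : c ≠ d := by grind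
      -- None of the edges `b → c`, `c → a` of `p` lies on a common 3-cycle with one of the edges
      -- `b → d`, `d → a` of `q`.
      simp only [formPerm_triple_apply hc, formPerm_triple_apply hd, formPerm_triple_apply hu] at *
      clear hp hq hσ
      grind

theorem threeCyclesAlong_subset_of_subset {K : Subgroup (Perm X)} (hab : a ≠ b) (hbx : b ≠ x)
    (hK : threeCyclesAlong a b ⊆ K) : threeCyclesAlong b x ⊆ K := by
  classical
  rintro σ ⟨hσ, hσb⟩
  by_cases hxa : x = a
  · subst hxa
    exact inv_mem_iff.1 (hK ⟨hσ.inv, Perm.inv_eq_iff_eq.2 hσb.symm⟩)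
  have habx : [a, b, x].Nodup := by grind
  set g := formPerm [a, b, x] with hg
  have hgK : g ∈ K := hK (formPerm_mem_threeCyclesAlong habx)
  have hga : g a = b := by rw [hg, formPerm_triple_apply habx, if_pos rfl]
  have hgb : g b = x := by rw [hg, formPerm_triple_apply habx, if_neg hab.symm, if_pos rfl]
  have hconj : g⁻¹ * σ * g⁻¹⁻¹ ∈ K :=
    hK ⟨hσ.conj g⁻¹, by simp [hga, hσb, symm_apply_eq, hgb]⟩
  exact (K.mul_mem_cancel_left (inv_mem hgK)).1
    ((K.mul_mem_cancel_right (inv_mem (inv_mem hgK))).1 hconj)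

theorem FAlt_le_of_threeCyclesAlong_subset {K : Subgroup (Perm X)} (hab : a ≠ b)
    (hK : threeCyclesAlong a b ⊆ K) : FAlt X ≤ K := by
  refine (Subgroup.closure_le K).2 fun σ hσ ↦ ?_
  obtain ⟨x, hxb, hx⟩ : ∃ x, b ≠ x ∧ σ x ≠ x := by
    obtain ⟨x, hx⟩ := IsThreeCycle.exists_apply_ne hσ
    by_cases hbx : b = x
    · exact ⟨σ x, hbx.trans_ne hx.symm, σ.injective.ne hx⟩
    · exact ⟨x, hbx, hx⟩
  exact threeCyclesAlong_subset_of_subset hxb hx.symm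
    (threeCyclesAlong_subset_of_subset hab hxb hK) ⟨hσ, rfl⟩

theorem eq_one_of_commute_threeCycles (hX : 3 < #X)
    (h : ∀ τ, IsThreeCycle τ → Commute σ τ) : σ = 1 := by
  classical
  ext x
  by_contra hx
  obtain ⟨y, hy⟩ : ∃ y, y ∉ [x, σ x, x] :=
    Cardinal.exists_notMem_of_length_lt _ (by simpa using hX)
  obtain ⟨z, hz⟩ : ∃ z, z ∉ [x, σ x, y] :=
    Cardinal.exists_notMem_of_length_lt _ (by simpa using hX)
  have hnodup : [σ x, y, z].Nodup := by grind
  have hcomm : σ (formPerm [σ x, y, z] x) = formPerm [σ x, y, z] (σ x) :=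
    Perm.ext_iff.1 (h _ (isThreeCycle_formPerm hnodup)).eq x
  simp only [formPerm_triple_apply hnodup, Perm.one_apply] at hx hcomm
  grind

theorem exists_map_threeCyclesAlong {a' b' : Y} (hab : a ≠ b) (F : threeCyclesAlong a b → Y) :
    ∃ f : X → Y, f a = a' ∧ f b = b' ∧ ∀ σ, f (σ.1 b) = F σ := by
  classical
  have hinj : Function.Injective fun σ : threeCyclesAlong a b ↦ σ.1 b := by
    rintro ⟨σ, hσ, hσb⟩ ⟨τ, hτ, hτb⟩ h
    refine Subtype.ext (hσ.eq_of_apply_eq hτ (hσb.trans_ne hab.symm) (hσb.trans hτb.symm) ?_)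
    simpa only [hσb, hτb] using h
  have hne (σ : threeCyclesAlong a b) : σ.1 b ≠ a ∧ σ.1 b ≠ b := by
    obtain ⟨σ, hσ, hσb⟩ := σ
    obtain ⟨c, hc, rfl⟩ := hσ.exists_eq_formPerm_of_apply_eq hσb hab
    simp only [formPerm_triple_apply hc]
    grind
  refine ⟨Function.extend (fun σ : threeCyclesAlong a b ↦ σ.1 b) F
    (Function.update (fun _ ↦ b') a a'), ?_, ?_, hinj.extend_apply _ _⟩
  · rw [Function.extend_apply' _ _ _ fun ⟨σ, h⟩ ↦ (hne σ).1 h, Function.update_self]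
  · rw [Function.extend_apply' _ _ _ fun ⟨σ, h⟩ ↦ (hne σ).2 h, Function.update_of_ne hab.symm]

theorem eq_or_exists_threeCyclesAlong (hab : a ≠ b) (x : X) :
    x = a ∨ x = b ∨ ∃ σ ∈ threeCyclesAlong a b, σ b = x := by
  classical
  refine or_iff_not_imp_left.2 fun hxa ↦ or_iff_not_imp_left.2 fun hxb ↦ ?_
  have habx : [a, b, x].Nodup := by grind
  exact ⟨_, formPerm_mem_threeCyclesAlong habx,
    by rw [formPerm_triple_apply habx, if_neg hab.symm, if_pos rfl]⟩

theorem exists_equiv_of_mem_threeCyclesAlong_iff {a' b' : Y} (hG : FAlt X ≤ G) (hH : FAlt Y ≤ H)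
    (hab : a ≠ b) (hab' : a' ≠ b') (φ : G ≃* H)
    (hφ : ∀ g, (φ g : Perm Y) ∈ threeCyclesAlong a' b' ↔ (g : Perm X) ∈ threeCyclesAlong a b) :
    ∃ e : X ≃ Y, ∀ g : G, (g : Perm X) ∈ threeCyclesAlong a b → φ g = e.permCongr g := by
  have hφ' (h) : (φ.symm h : Perm X) ∈ threeCyclesAlong a b ↔
      (h : Perm Y) ∈ threeCyclesAlong a' b' := by
    rw [← hφ, φ.apply_symm_apply]
  obtain ⟨f, hfa, hfb, hf⟩ := exists_map_threeCyclesAlong (a' := a') (b' := b') hab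
    fun σ ↦ (φ ⟨σ, hG σ.2.1.mem_FAlt⟩ : Perm Y) b'
  obtain ⟨f', hfa', hfb', hf'⟩ := exists_map_threeCyclesAlong (a' := a) (b' := b) hab'
    fun σ ↦ (φ.symm ⟨σ, hH σ.2.1.mem_FAlt⟩ : Perm X) b
  have hleft : Function.LeftInverse f' f := fun x ↦ by
    obtain rfl | rfl | ⟨σ, hσ, rfl⟩ := eq_or_exists_threeCyclesAlong hab x
    · rw [hfa, hfa']
    · rw [hfb, hfb']
    · rw [hf ⟨σ, hσ⟩, hf' ⟨_, (hφ _).2 hσ⟩]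
      simp
  have hright : Function.RightInverse f' f := fun y ↦ by
    obtain rfl | rfl | ⟨σ, hσ, rfl⟩ := eq_or_exists_threeCyclesAlong hab' y
    · rw [hfa', hfa]
    · rw [hfb', hfb]
    · rw [hf' ⟨σ, hσ⟩, hf ⟨_, (hφ' _).2 hσ⟩]
      simp
  let e : X ≃ Y := ⟨f, f', hleft, hright⟩
  have hea : e.symm a' = a := hfa'
  refine ⟨e, fun g hg ↦ ?_⟩
  obtain ⟨hφg, hφga⟩ := (hφ g).2 hg
  refine hφg.eq_of_apply_eq (hg.1.permCongr e) (hφga.trans_ne hab'.symm) ?_ ?_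
  · rw [permCongr_apply, hea, hg.2, hφga]
    exact hfb.symm
  · rw [permCongr_apply, permCongr_apply, hea, hg.2, symm_apply_apply, hφga]
    exact (hf ⟨g, hg⟩).symm

theorem exists_threeCyclesAlong_iff (hG : FAlt X ≤ G) (hX : 3 < #X) (hab : a ≠ b) (φ : G ≃* H)
    (hφ : ∀ g, IsThreeCycle (φ g : Perm Y) ↔ IsThreeCycle (g : Perm X)) :
    ∃ a' b' : Y, a' ≠ b' ∧
      ∀ g, (φ g : Perm Y) ∈ threeCyclesAlong a' b' ↔ (g : Perm X) ∈ threeCyclesAlong a b := by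
  classical
  obtain ⟨c, hc⟩ : ∃ c, c ∉ [a, b, a] :=
    Cardinal.exists_notMem_of_length_lt _ (by simpa using hX)
  obtain ⟨d, hd⟩ : ∃ d, d ∉ [a, b, c] :=
    Cardinal.exists_notMem_of_length_lt _ (by simpa using hX)
  have habc : [a, b, c].Nodup := by grind
  have habd : [a, b, d].Nodup := by grind
  obtain ⟨p, hp⟩ : ∃ p : G, (p : Perm X) = formPerm [a, b, c] :=
    ⟨⟨_, hG (isThreeCycle_formPerm habc).mem_FAlt⟩, rfl⟩
  obtain ⟨q, hq⟩ : ∃ q : G, (q : Perm X) = formPerm [a, b, d] :=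
    ⟨⟨_, hG (isThreeCycle_formPerm habd).mem_FAlt⟩, rfl⟩
  have hpmem : (p : Perm X) ∈ threeCyclesAlong a b := hp ▸ formPerm_mem_threeCyclesAlong habc
  have hqmem : (q : Perm X) ∈ threeCyclesAlong a b := hq ▸ formPerm_mem_threeCyclesAlong habd
  have hpq : (p : Perm X) ≠ q := fun hpq ↦ by
    have hb := Perm.ext_iff.1 hpq b
    rw [hp, hq, formPerm_triple_apply habc, formPerm_triple_apply habd] at hb
    grind
  have horder (g h : G) : orderOf (φ g * φ h : Perm Y) = orderOf (g * h : Perm X) := by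
    simp only [← Subgroup.coe_mul, Subgroup.orderOf_coe, ← map_mul, MulEquiv.orderOf_eq]
  have hφp : IsThreeCycle (φ p : Perm Y) := (hφ p).2 hpmem.1
  have hφq : IsThreeCycle (φ q : Perm Y) := (hφ q).2 hqmem.1
  obtain ⟨hne, a', ha', h⟩ := (hφp.orderOf_mul_eq_two_iff hφq).1 <| by
    rw [horder]
    exact hpmem.1.orderOf_mul_eq_two hqmem.1 hpq (hpmem.2.trans_ne hab.symm)
      (hpmem.2.trans hqmem.2.symm)
  refine ⟨a', (φ p : Perm Y) a', ha'.symm, fun g ↦ ?_⟩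
  rw [mem_threeCyclesAlong_iff ha'.symm ⟨hφp, rfl⟩ ⟨hφq, h.symm⟩ hne,
    mem_threeCyclesAlong_iff hab hpmem hqmem hpq]
  simp only [hφ, horder, Subtype.coe_inj, φ.injective.eq_iff]

theorem eq_subtype_of_forall_threeCyclesAlong (hG : FAlt X ≤ G) (hX : 3 < #X) (hab : a ≠ b)
    (ψ : G →* Perm X) (h : ∀ g : G, (g : Perm X) ∈ threeCyclesAlong a b → ψ g = g) :
    ψ = G.subtype := by
  have hfix (c : G) (hc : IsThreeCycle (c : Perm X)) : ψ c = c := by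
    have hle : FAlt X ≤ (ψ.eqLocus G.subtype).map G.subtype :=
      FAlt_le_of_threeCyclesAlong_subset hab fun σ hσ ↦
        ⟨⟨σ, hG hσ.1.mem_FAlt⟩, h ⟨σ, hG hσ.1.mem_FAlt⟩ hσ, rfl⟩
    obtain ⟨c', hc', hcc'⟩ := hle hc.mem_FAlt
    obtain rfl : c' = c := Subtype.ext hcc'
    exact hc'
  ext1 g
  refine inv_mul_eq_one.1 (eq_one_of_commute_threeCycles hX fun τ hτ ↦ ?_)
  let c : G := ⟨τ, hG hτ.mem_FAlt⟩
  have hconj : ψ g * τ * (ψ g)⁻¹ = g * τ * (g : Perm X)⁻¹ := by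
    simpa [hfix c hτ, c] using hfix (g * c * g⁻¹) (hτ.conj g)
  rw [Commute, SemiconjBy, G.subtype_apply, mul_assoc, inv_mul_eq_iff_eq_mul, ← mul_assoc,
    ← mul_assoc, hconj, inv_mul_cancel_right]

theorem exists_equiv_forall_eq_permCongr (hG : FAlt X ≤ G) (hH : FAlt Y ≤ H) (hX : 6 < #X)
    (hY : 6 < #Y) (φ : G ≃* H) : ∃ e : X ≃ Y, ∀ g : G, φ g = e.permCongr g := by
  have hX3 : 3 < #X := lt_trans (by norm_num) hX
  obtain ⟨a, b, hab⟩ := Cardinal.one_lt_iff_nontrivial.1 (lt_trans (by norm_num) hX3)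
  obtain ⟨a', b', hab', h⟩ :=
    exists_threeCyclesAlong_iff hG hX3 hab φ (isThreeCycle_apply_iff hG hH hX hY φ)
  obtain ⟨e, he⟩ := exists_equiv_of_mem_threeCyclesAlong_iff hG hH hab hab' φ h
  let ψ : G →* Perm X := e.permCongrHom.symm.toMonoidHom.comp (H.subtype.comp φ.toMonoidHom)
  have hψ (g : G) : ψ g = e.symm.permCongr (φ g) := rfl
  have hψ_eq : ψ = G.subtype := eq_subtype_of_forall_threeCyclesAlong hG hX3 hab ψ fun g hg ↦ by
    rw [hψ, he g hg, ← permCongr_symm, symm_apply_apply]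
  refine ⟨e, fun g ↦ ?_⟩
  rw [← symm_apply_eq, permCongr_symm, ← hψ, hψ_eq, Subgroup.subtype_apply]

end ThreeCycle

section FixedPoints

variable {X : Type*} {t : Perm X}

theorem exists_isThreeCycle_fixedBy_mul_ssubset (ht : (fixedBy X t).Infinite) :
    ∃ c, IsThreeCycle c ∧ fixedBy X (t * c) ⊂ fixedBy X t := by
  classical
  obtain ⟨s, hs, -, hcard⟩ := ht.exists_subset_ncard_eq 3
  obtain ⟨x, y, z, hxy, hxz, hyz, rfl⟩ := Set.ncard_eq_three.1 hcard
  have hfix (w) (hw : w = x ∨ w = y ∨ w = z) : t w = w := hs hw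
  have hnodup : [x, y, z].Nodup := by grind
  have hcyc (w) := formPerm_triple_apply hnodup w
  refine ⟨formPerm [x, y, z], isThreeCycle_formPerm hnodup, Set.ssubset_iff_exists.2
    ⟨fun w (hw : t (formPerm [x, y, z] w) = w) ↦ ?_, x, hfix x (.inl rfl), fun hx ↦ ?_⟩⟩
  · change t w = w
    grind
  · change t (formPerm [x, y, z] x) = x at hx
    grind

theorem exists_isThreeCycle_compl_fixedBy_mul_ssubset (ht : (fixedBy X t)ᶜ.Infinite) :
    ∃ c, IsThreeCycle c ∧ (fixedBy X (t * c))ᶜ ⊂ (fixedBy X t)ᶜ := by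
  classical
  obtain ⟨b, hb : t b ≠ b⟩ := ht.nonempty
  obtain ⟨z, hz : t z ≠ z, hz'⟩ := ht.exists_notMem_finite (Set.toFinite {b, t b})
  have hnodup : [t b, b, z].Nodup := by grind
  have hinj (h : t (t b) = t b) : t b = b := t.injective h
  have hcyc (w) := formPerm_triple_apply hnodup w
  refine ⟨formPerm [t b, b, z], isThreeCycle_formPerm hnodup, compl_lt_compl_iff_lt.2 <|
    Set.ssubset_iff_exists.2 ⟨fun w (hw : t w = w) ↦ ?_, t b, ?_, hb ∘ hinj⟩⟩
  · change t (formPerm [t b, b, z] w) = w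
    grind
  · change t (formPerm [t b, b, z] (t b)) = t b
    grind

theorem IsThreeCycle.finite_symmDiff_fixedBy_mul {c : Perm X} (hc : IsThreeCycle c) :
    (symmDiff (fixedBy X (t * c)) (fixedBy X t)).Finite := by
  refine hc.finite_support.subset fun x hx hcx ↦ ?_
  simp [Set.mem_symmDiff, Perm.smul_def, hcx] at hx

end FixedPoints

theorem smul_eq_of_le_smul_of_isOfFinOrder {M P : Type*} [Group M] [PartialOrder P]
    [MulAction M P] [CovariantClass M P HSMul.hSMul LE.le] {g : M} {a : P}
    (hg : IsOfFinOrder g) (h : a ≤ g • a) : g • a = a := by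
  refine (h.antisymm ?_).symm
  calc g • a ≤ g • g ^ (orderOf g - 1) • a := smul_mono_right g (le_pow_smul h _)
    _ = a := by
      rw [smul_smul, ← pow_succ', Nat.sub_add_cancel hg.orderOf_pos, pow_orderOf_eq_one, one_smul]

theorem twistedConj_equivalence {G : Type*} [Group G] (φ : G ≃* G) :
    Equivalence (TwistedConj φ) where
  refl a := ⟨1, by simp⟩
  symm := by
    rintro a _ ⟨x, rfl⟩
    exact ⟨x⁻¹, by simp [mul_assoc]⟩
  trans := by
    rintro a _ _ ⟨x, rfl⟩ ⟨y, rfl⟩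
    exact ⟨x * y, by simp [mul_assoc]⟩

theorem infinite_quot_twistedConj_of_strictAnti {M P : Type*} [Group M] [PartialOrder P]
    [MulAction M P] [CovariantClass M P HSMul.hSMul LE.le] {G : Subgroup M}
    (htor : IsMulTorsion G) {φ : G ≃* G} {τ : M} (hφ : ∀ g, (φ g : M) = τ * g * τ⁻¹)
    {D : M → P} (hD : ∀ g h, D (g * h * g⁻¹) = g • D h) {f : ℕ → G}
    (hf : StrictAnti fun n ↦ D (τ⁻¹ * f n)) : Infinite (Quot (TwistedConj φ)) := by
  have eq_of_le {m n : ℕ} (hmn : m ≤ n) (h : TwistedConj φ (f n) (f m)) : m = n := by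
    obtain ⟨x, hx⟩ := h
    have hconj : τ⁻¹ * f m = (x⁻¹ : M) * (τ⁻¹ * f n) * (x⁻¹ : M)⁻¹ := by
      simp [← hx, hφ, mul_assoc]
    have hsmul : D (τ⁻¹ * f m) = (x⁻¹ : M) • D (τ⁻¹ * f n) := by rw [hconj, hD]
    have hfin : IsOfFinOrder (x⁻¹ : M) := (G.subtype.isOfFinOrder (htor x)).inv
    refine hf.injective (hsmul.trans (smul_eq_of_le_smul_of_isOfFinOrder hfin ?_))
    exact hsmul ▸ hf.antitone hmn
  have hequiv := twistedConj_equivalence φ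
  refine Infinite.of_injective (fun n ↦ Quot.mk _ (f n)) fun m n h ↦ ?_
  replace h := (hequiv.quot_mk_eq_iff _ _).1 h
  exact (le_total m n).elim (eq_of_le · (hequiv.symm h)) fun hnm ↦ (eq_of_le hnm h).symm

theorem exists_strictAnti_of_forall_exists_isThreeCycle {X : Type*} {t : Perm X}
    {D : Perm X → Set X} (ht : (D t).Infinite)
    (hD : ∀ s, (D s).Infinite → ∃ c, IsThreeCycle c ∧ D (s * c) ⊂ D s)
    (hfin : ∀ s c, IsThreeCycle c → (symmDiff (D (s * c)) (D s)).Finite) :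
    ∃ f : ℕ → FAlt X, StrictAnti fun n ↦ D (t * f n) := by
  let A := {B : Set X // B.Infinite ∧ ∃ c : FAlt X, D (t * c) = B}
  have : Nonempty A := ⟨D t, ht, 1, by simp⟩
  have : NoMinOrder A := ⟨by
    rintro ⟨_, hs, s, rfl⟩
    obtain ⟨c, hc, hlt⟩ := hD _ hs
    have hinf : (D (t * s * c)).Infinite := fun h ↦
      hs (.of_sdiff ((hfin _ c hc).subset Set.subset_union_right) h)
    exact ⟨⟨_, hinf, s * ⟨c, hc.mem_FAlt⟩, by simp [mul_assoc]⟩, hlt⟩⟩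
  obtain ⟨u, hu⟩ := Nat.exists_strictAnti A
  choose f hf using fun n ↦ (u n).2.2
  refine ⟨f, fun m n hmn ↦ ?_⟩
  simp only [hf]
  exact hu hmn

theorem infinite_quot_twistedConj_of_infinite {X : Type*} {G : Subgroup (Perm X)}
    (hG : FAlt X ≤ G) (htor : IsMulTorsion G) {φ : G ≃* G} {τ : Perm X}
    (hφ : ∀ g, (φ g : Perm X) = τ * g * τ⁻¹) {D : Perm X → Set X}
    (hD : ∀ g h, D (g * h * g⁻¹) = g • D h) (hinf : (D τ⁻¹).Infinite)
    (hlt : ∀ s, (D s).Infinite → ∃ c, IsThreeCycle c ∧ D (s * c) ⊂ D s)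
    (hfin : ∀ s c, IsThreeCycle c → (symmDiff (D (s * c)) (D s)).Finite) :
    Infinite (Quot (TwistedConj φ)) := by
  have : CovariantClass (Perm X) (Set X) HSMul.hSMul LE.le := ⟨fun _ _ _ ↦ Set.smul_set_mono⟩
  obtain ⟨f, hf⟩ := exists_strictAnti_of_forall_exists_isThreeCycle hinf hlt hfin
  exact infinite_quot_twistedConj_of_strictAnti htor hφ hD
    (f := fun n ↦ ⟨f n, hG (f n).2⟩) hf

/-- An infinite torsion group fully containing `FAlt X` has the `R∞` property. -/
theorem rinfinity_of_torsion_fullyContains {X : Type*} [Infinite X]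
    (G : Subgroup (Equiv.Perm X)) (hG : FAlt X ≤ G)
    (htor : Monoid.IsTorsion ↥G) :
    RInfinity ↥G := by
  intro φ
  have hX : 6 < #X := Cardinal.ofNat_lt_aleph0.trans_le (Cardinal.aleph0_le_mk X)
  obtain ⟨τ, hτ⟩ := exists_equiv_forall_eq_permCongr hG hG hX hX φ
  simp only [permCongr_eq_mul] at hτ
  have hfixed_or_moved : (fixedBy X τ⁻¹).Infinite ∨ (fixedBy X τ⁻¹)ᶜ.Infinite := by
    rw [← Set.infinite_union, Set.union_compl_self]
    exact Set.infinite_univ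
  rcases hfixed_or_moved with hfixed | hmoved
  · refine infinite_quot_twistedConj_of_infinite hG htor hτ (D := fixedBy X) (fun g h ↦ ?_) hfixed
      (fun _ ↦ exists_isThreeCycle_fixedBy_mul_ssubset) fun _ _ ↦ (·.finite_symmDiff_fixedBy_mul)
    rw [smul_fixedBy]
  · refine infinite_quot_twistedConj_of_infinite hG htor hτ (D := fun s ↦ (fixedBy X s)ᶜ)
      (fun g h ↦ ?_) hmoved (fun _ ↦ exists_isThreeCycle_compl_fixedBy_mul_ssubset) fun s c hc ↦ ?_
    · rw [Set.smul_set_compl, smul_fixedBy]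
    · rw [compl_symmDiff_compl]
      exact hc.finite_symmDiff_fixedBy_mul
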